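/- For every prime p ≥ 5 and every positive integer m with p ∤ m, Σ over (i,j,k) with i+j+k = m·p and p ∤ ijk of 1/(ijk) ≡ -2m·B_{p-3} (mod p). -/

import Mathlib

open Finset

def Red (p : ℕ) [Fact p.Prime] (q : ℚ) (z : ZMod p) : Prop :=
  ∃ x : ℤ_[p], (x : ℚ_[p]) = (q : ℚ_[p]) ∧ PadicInt.toZMod x = z

section
variable {p : ℕ} [Fact p.Prime]

lemma Red.add {a b : ℚ} {x y : ZMod p} (h : Red p a x) (h' : Red p b y) : Red p (a + b) (x + y) := by
  obtain ⟨u, hu, rfl⟩ := h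
  obtain ⟨v, hv, rfl⟩ := h'
  exact ⟨u + v, by push_cast; rw [hu, hv], by simp⟩

lemma Red.mul {a b : ℚ} {x y : ZMod p} (h : Red p a x) (h' : Red p b y) : Red p (a * b) (x * y) := by
  obtain ⟨u, hu, rfl⟩ := h
  obtain ⟨v, hv, rfl⟩ := h'
  exact ⟨u * v, by push_cast; rw [hu, hv], by simp⟩

lemma Red.neg {a : ℚ} {x : ZMod p} (h : Red p a x) : Red p (-a) (-x) := by
  obtain ⟨u, hu, rfl⟩ := h
  exact ⟨-u, by push_cast; rw [hu], by simp⟩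

lemma Red.nat (n : ℕ) : Red p n n := ⟨n, by simp, by simp⟩

lemma Red.pow {a : ℚ} {x : ZMod p} (h : Red p a x) (n : ℕ) : Red p (a ^ n) (x ^ n) := by
  obtain ⟨u, hu, rfl⟩ := h
  exact ⟨u ^ n, by push_cast; rw [hu], by simp⟩

lemma Red.inv {n : ℕ} (h : ¬ p ∣ n) : Red p (n : ℚ)⁻¹ (n : ZMod p)⁻¹ := by
  have hn : ‖(n : ℚ_[p])‖ = 1 := by
    rw [Padic.norm_natCast_eq_one_iff]
    exact (Nat.Prime.coprime_iff_not_dvd Fact.out).2 h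
  have hn0 : (n : ℚ_[p]) ≠ 0 := by
    intro h0; rw [h0] at hn; simp at hn
  obtain ⟨u, hu⟩ : ∃ u : ℤ_[p], (u : ℚ_[p]) = (n : ℚ_[p])⁻¹ :=
    ⟨⟨(n : ℚ_[p])⁻¹, by rw [norm_inv, hn]; simp⟩, rfl⟩
  refine ⟨u, by simp [hu], ?_⟩
  apply eq_inv_of_mul_eq_one_left
  rw [← map_natCast (PadicInt.toZMod (p := p)) n, ← map_mul, ← map_one (PadicInt.toZMod (p := p))]
  congr 1
  apply Subtype.ext
  simp [hn0, hu]

lemma Red.sum {ι : Type*} (s : Finset ι) (f : ι → ℚ) (g : ι → ZMod p)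
    (h : ∀ i ∈ s, Red p (f i) (g i)) : Red p (∑ i ∈ s, f i) (∑ i ∈ s, g i) := by
  classical
  induction s using Finset.induction_on with
  | empty => simpa using Red.nat (p := p) 0
  | insert a s ha ih =>
    rw [sum_insert ha, sum_insert ha]
    exact (h a (by simp)).add (ih fun i hi => h i (by simp [hi]))

lemma Red.unique {a : ℚ} {x y : ZMod p} (h : Red p a x) (h' : Red p a y) : x = y := by
  obtain ⟨u, hu, rfl⟩ := h
  obtain ⟨v, hv, rfl⟩ := h'
  congr 1
  exact Subtype.ext (hu.trans hv.symm)

lemma Red.norm {a : ℚ} (h : Red p a 0) : ‖(a : ℚ_[p])‖ ≤ (p : ℝ) ^ (-1 : ℤ) := by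
  obtain ⟨u, hu, h0⟩ := h
  rw [← hu]
  have : u ∈ RingHom.ker (PadicInt.toZMod (p := p)) := h0
  rw [PadicInt.ker_toZMod, PadicInt.maximalIdeal_eq_span_p] at this
  have h2 := (PadicInt.norm_le_pow_iff_mem_span_pow u 1).2 (by simpa using this)
  simpa using h2

lemma bern_red (k : ℕ) (hk : k + 1 < p) : ∃ z, Red p (bernoulli k) z := by
  induction k using Nat.strong_induction_on with
  | _ k ih =>
    choose! g hg using fun j hj => ih j hj
    have hs := sum_bernoulli (k + 1)
    rw [sum_range_succ] at hs
    have h1 : bernoulli k = ((k + 1 : ℕ) : ℚ)⁻¹ * (((if k + 1 = 1 then 1 else 0 : ℕ) : ℚ)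
        + -(∑ j ∈ range k, ((k + 1).choose j : ℚ) * bernoulli j)) := by
      have : ((k + 1 : ℕ) : ℚ) ≠ 0 := by positivity
      rw [eq_inv_mul_iff_mul_eq₀ this]
      simp only [Nat.choose_succ_self_right] at hs
      push_cast at hs ⊢
      linarith
    rw [h1]
    refine ⟨_, (Red.inv ?_).mul ((Red.nat _).add (Red.neg (Red.sum _ _
      (fun j => ((k + 1).choose j : ZMod p) * g j) fun j hj => (Red.nat _).mul (hg j ?_ ?_))))⟩
    · exact Nat.not_dvd_of_pos_of_lt (by omega) hk
    · simpa using hj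
    · have := mem_range.1 hj; omega

lemma sum_range_p (g : ZMod p → ZMod p) : ∑ i ∈ range p, g (i : ZMod p) = ∑ x, g x := by
  have : NeZero p := ⟨(Fact.out : p.Prime).ne_zero⟩
  refine sum_nbij' (fun i : ℕ => (i : ZMod p)) (fun x : ZMod p => x.val) ?_ ?_ ?_ ?_ ?_
  · simp
  · intro x _; simpa using ZMod.val_lt x
  · intro i hi; exact ZMod.val_cast_of_lt (mem_range.1 hi)
  · intro x _; simp
  · simp

lemma sum_range_mul_p (g : ZMod p → ZMod p) (a : ℕ) :
    ∑ i ∈ range (a * p), g (i : ZMod p) = a * ∑ x, g x := by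
  induction a with
  | zero => simp
  | succ a ih =>
    rw [Nat.succ_mul, sum_range_add, ih, ← sum_range_p g]
    push_cast
    simp
    ring

lemma sum_blocks (h : ℕ → ZMod p) (a : ℕ) :
    ∑ i ∈ range (a * p), h i = ∑ b ∈ range a, ∑ r ∈ range p, h (b * p + r) := by
  induction a with
  | zero => simp
  | succ a ih => rw [Nat.succ_mul, sum_range_add, ih, sum_range_succ]

lemma D_zero (hp : 5 ≤ p) : ∑ r : ZMod p, r⁻¹ * ∑ x : ZMod p, x⁻¹ * (r - x)⁻¹ = 0 := by
  set D := ∑ r : ZMod p, r⁻¹ * ∑ x : ZMod p, x⁻¹ * (r - x)⁻¹ with hD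
  have h : D = -D := by
    conv_lhs => rw [hD, ← Equiv.sum_comp (Equiv.neg _)]
    conv_rhs => rw [hD]
    rw [← sum_neg_distrib]
    refine sum_congr rfl fun r _ => ?_
    rw [← Equiv.sum_comp (Equiv.neg _)]
    have : ∀ x : ZMod p, (Equiv.neg _ r - Equiv.neg _ x) = -(r - x) := by intro x; simp; ring
    simp only [this]
    simp only [Equiv.neg_apply, inv_neg, mul_neg, neg_neg, neg_mul]
  have h2 : (2 : ZMod p) ≠ 0 := by
    intro h0
    have : ((2 : ℕ) : ZMod p) = 0 := by exact_mod_cast h0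
    rw [ZMod.natCast_eq_zero_iff] at this
    have := Nat.le_of_dvd (by norm_num) this
    omega
  have : 2 * D = 0 := by linear_combination h
  simpa [h2] using this

lemma cast_ne_zero_of_lt_p {r : ℕ} (h0 : 0 < r) (h : r < p) : (r : ZMod p) ≠ 0 := by
  rw [Ne, ZMod.natCast_eq_zero_iff]
  exact Nat.not_dvd_of_pos_of_lt h0 h

lemma inv_eq_pow (hp : 5 ≤ p) (x : ZMod p) : x⁻¹ = x ^ (p - 2) := by
  by_cases h : x = 0
  · subst h; rw [inv_zero, zero_pow (by omega)]
  · apply inv_eq_of_mul_eq_one_right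
    rw [← pow_succ', show p - 2 + 1 = p - 1 by omega, ZMod.pow_card_sub_one_eq_one h]

lemma H_eq (hp : 5 ≤ p) (β : ℕ → ZMod p) (hβ : ∀ k, k + 1 < p → Red p (bernoulli k) (β k)) (r : ℕ) :
    ∑ i ∈ range r, (i : ZMod p)⁻¹ = ∑ k ∈ range (p - 1), - (β k * ((p - 1).choose k : ZMod p) * (r : ZMod p) ^ (p - 1 - k)) := by
  have h1 := sum_range_pow r (p - 2)
  have e : p - 2 + 1 = p - 1 := by omega
  have e' : ((p - 2 : ℕ) : ℚ) + 1 = ((p - 1 : ℕ) : ℚ) := by rw [← e]; push_cast; ring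
  rw [e, e'] at h1
  have L : Red p (∑ k ∈ range r, (k : ℚ) ^ (p - 2)) (∑ i ∈ range r, (i : ZMod p)⁻¹) := by
    refine Red.sum _ _ _ fun i _ => ?_
    rw [inv_eq_pow hp]
    exact (Red.nat i).pow _
  refine L.unique ?_
  rw [h1]
  refine Red.sum _ _ _ fun k hk => ?_
  have hk := mem_range.1 hk
  have hinv : Red p ((p - 1 : ℕ) : ℚ)⁻¹ ((p - 1 : ℕ) : ZMod p)⁻¹ :=
    Red.inv (Nat.not_dvd_of_pos_of_lt (by omega) (by omega))
  have h3 : ((p - 1 : ℕ) : ZMod p)⁻¹ = -1 := by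
    rw [Nat.cast_sub (by omega)]; simp [inv_neg]
  rw [h3] at hinv
  have := (((hβ k (by omega)).mul (Red.nat ((p - 1).choose k))).mul ((Red.nat r).pow (p - 1 - k))).mul hinv
  rw [mul_neg_one] at this
  rw [div_eq_mul_inv]
  exact this

lemma choose_eq (hp : 5 ≤ p) : (((p - 1).choose (p - 3) : ℕ) : ZMod p) = 1 := by
  obtain ⟨q, hq⟩ : ∃ q, p = q + 3 := ⟨p - 3, by omega⟩
  have e1 : p - 1 = q + 2 := by omega
  have e3 : p - 3 = q := by omega
  rw [e1, e3, Nat.choose_symm_add]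
  have h := Nat.triangle_succ (q + 1)
  have h2 : (q + 2).choose 2 * 2 = (q + 2) * (q + 1) := by
    rw [Nat.choose_two_right]
    exact Nat.div_mul_cancel (by simpa using (Nat.even_mul_pred_self (q + 2)).two_dvd)
  have h3 : (((q + 2).choose 2 : ℕ) : ZMod p) * 2 = (q + 2) * (q + 1) := by exact_mod_cast congrArg (Nat.cast : ℕ → ZMod p) h2
  have hq0 : (q : ZMod p) + 3 = 0 := by
    have : ((q + 3 : ℕ) : ZMod p) = 0 := by rw [← hq]; simp
    exact_mod_cast this
  have h20 : (2 : ZMod p) ≠ 0 := by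
    have := cast_ne_zero_of_lt_p (p := p) (r := 2) (by norm_num) (by omega)
    exact_mod_cast this
  apply mul_right_cancel₀ h20
  rw [h3]
  linear_combination (q : ZMod p) * hq0

lemma W_eq (hp : 5 ≤ p) (β : ℕ → ZMod p) (hβ : ∀ k, k + 1 < p → Red p (bernoulli k) (β k)) :
    ∑ r ∈ range p, ((r : ZMod p)⁻¹) ^ 2 * ∑ i ∈ range r, (i : ZMod p)⁻¹ = β (p - 3) := by
  have : ∀ r ∈ range p, ((r : ZMod p)⁻¹) ^ 2 * ∑ i ∈ range r, (i : ZMod p)⁻¹ =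
      ∑ k ∈ range (p - 1), - (β k * ((p - 1).choose k : ZMod p)) * (((r : ZMod p)⁻¹) ^ 2 * (r : ZMod p) ^ (p - 1 - k)) := by
    intro r _
    rw [H_eq hp β hβ, mul_sum]
    refine sum_congr rfl fun k _ => by ring
  rw [sum_congr rfl this, sum_comm]
  simp only [← mul_sum]
  have key : ∀ k ∈ range (p - 1), ∑ r ∈ range p, (((r : ZMod p)⁻¹) ^ 2 * (r : ZMod p) ^ (p - 1 - k)) = if k = p - 3 then -1 else 0 := by
    intro k hk
    have hk := mem_range.1 hk
    rw [sum_range_p (fun x => x⁻¹ ^ 2 * x ^ (p - 1 - k))]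
    split_ifs with h
    · have e : p - 1 - k = 2 := by omega
      have e2 : ∀ x : ZMod p, x⁻¹ ^ 2 * x ^ (p - 1 - k) = 1 - if x = 0 then 1 else 0 := by
        intro x
        rw [e]
        by_cases hx : x = 0
        · simp [hx]
        · simp [hx]
      simp only [e2]
      simp
    · by_cases h' : k = p - 2
      · have e2 : ∀ x : ZMod p, x⁻¹ ^ 2 * x ^ (p - 1 - k) = x ^ (p - 2) := by
          intro x
          rw [← inv_eq_pow hp, show p - 1 - k = 1 by omega]
          by_cases hx : x = 0
          · simp [hx]
          · field_simp
        simp only [e2]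
        apply FiniteField.sum_pow_lt_card_sub_one
        rw [ZMod.card]; omega
      · have e2 : ∀ x : ZMod p, x⁻¹ ^ 2 * x ^ (p - 1 - k) = x ^ (p - 3 - k) := by
          intro x
          rw [show p - 1 - k = (p - 3 - k) + 2 by omega]
          by_cases hx : x = 0
          · rw [hx, zero_pow (show p - 3 - k ≠ 0 by omega)]; simp
          · field_simp
            ring
        simp only [e2]
        apply FiniteField.sum_pow_lt_card_sub_one
        rw [ZMod.card]; omega
  rw [sum_congr rfl fun k hk => by rw [key k hk]]
  simp only [mul_ite, mul_zero]
  rw [sum_ite_eq' , if_pos (mem_range.2 (by omega)), choose_eq hp]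
  ring

lemma G_eq (r : ℕ) (hr : r < p) : (r : ZMod p)⁻¹ * ∑ i ∈ range r, (i : ZMod p)⁻¹ * ((r : ZMod p) - i)⁻¹
    = 2 * (((r : ZMod p)⁻¹) ^ 2 * ∑ i ∈ range r, (i : ZMod p)⁻¹) := by
  rcases r with _ | s
  · simp
  have hr0 := cast_ne_zero_of_lt_p (p := p) (Nat.succ_pos s) hr
  rw [sum_range_succ' _ s, sum_range_succ' _ s]
  simp only [Nat.cast_zero, inv_zero, zero_mul, add_zero]
  have h1 : ∑ i ∈ range s, (((s + 1 : ℕ) : ZMod p) - ((i + 1 : ℕ) : ZMod p))⁻¹ = ∑ i ∈ range s, ((i + 1 : ℕ) : ZMod p)⁻¹ := by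
    rw [← sum_range_reflect]
    refine sum_congr rfl fun i hi => ?_
    have hi := mem_range.1 hi
    rw [← Nat.cast_sub (by omega)]
    congr 2; omega
  have h2 : ∑ i ∈ range s, ((i + 1 : ℕ) : ZMod p)⁻¹ * (((s + 1 : ℕ) : ZMod p) - ((i + 1 : ℕ) : ZMod p))⁻¹
     = ((s + 1 : ℕ) : ZMod p)⁻¹ * (∑ i ∈ range s, ((i + 1 : ℕ) : ZMod p)⁻¹ + ∑ i ∈ range s, (((s + 1 : ℕ) : ZMod p) - ((i + 1 : ℕ) : ZMod p))⁻¹) := by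
    rw [← sum_add_distrib, mul_sum]
    refine sum_congr rfl fun i hi => ?_
    have hi := mem_range.1 hi
    have ha := cast_ne_zero_of_lt_p (p := p) (Nat.succ_pos i) (by omega)
    have hb : ((s + 1 : ℕ) : ZMod p) - ((i + 1 : ℕ) : ZMod p) ≠ 0 := by
      rw [← Nat.cast_sub (by omega)]
      exact cast_ne_zero_of_lt_p (by omega) (by omega)
    generalize ((s + 1 : ℕ) : ZMod p) = S at *
    generalize hA : ((i + 1 : ℕ) : ZMod p) = A at *
    have ha' : A ≠ 0 := ha
    field_simp
    ring
  rw [h2, h1]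
  ring

lemma T_eq (hp : 5 ≤ p) (β : ℕ → ZMod p) (hβ : ∀ k, k + 1 < p → Red p (bernoulli k) (β k)) (m : ℕ) :
    ∑ n ∈ range (m * p), (n : ZMod p)⁻¹ * ∑ i ∈ range n, (i : ZMod p)⁻¹ * ((n : ZMod p) - i)⁻¹
     = 2 * m * β (p - 3) := by
  rw [sum_blocks]
  have : ∀ b ∈ range m, ∑ r ∈ range p, ((b * p + r : ℕ) : ZMod p)⁻¹ * ∑ i ∈ range (b * p + r), (i : ZMod p)⁻¹ * (((b * p + r : ℕ) : ZMod p) - i)⁻¹ = 2 * β (p - 3) := by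
    intro b _
    have e : ∀ r ∈ range p, ((b * p + r : ℕ) : ZMod p)⁻¹ * ∑ i ∈ range (b * p + r), (i : ZMod p)⁻¹ * (((b * p + r : ℕ) : ZMod p) - i)⁻¹
      = b * ((r : ZMod p)⁻¹ * ∑ x : ZMod p, x⁻¹ * ((r : ZMod p) - x)⁻¹) + 2 * (((r : ZMod p)⁻¹) ^ 2 * ∑ i ∈ range r, (i : ZMod p)⁻¹) := by
      intro r hr
      have hc : ((b * p + r : ℕ) : ZMod p) = r := by simp
      rw [hc, sum_range_add, sum_range_mul_p (fun x => x⁻¹ * ((r : ZMod p) - x)⁻¹), ← G_eq r (mem_range.1 hr)]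
      simp
      ring
    rw [sum_congr rfl e, sum_add_distrib, ← mul_sum, ← mul_sum, W_eq hp β hβ,
      sum_range_p (fun r => r⁻¹ * ∑ x : ZMod p, x⁻¹ * (r - x)⁻¹), D_zero hp]
    ring
  rw [sum_congr rfl this]
  simp
  ring

lemma reindex (m : ℕ) : ∑ l ∈ (Fintype.piFinset fun _ : Fin 3 => Finset.Ioo 0 (m * p)).filter
            (fun l : Fin 3 → ℕ => l 0 + l 1 + l 2 = m * p ∧ ∀ i, ¬ p ∣ l i),
          ((l 0 : ZMod p)⁻¹ * (l 1 : ZMod p)⁻¹ * (l 2 : ZMod p)⁻¹) =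
    - ∑ n ∈ range (m * p), (n : ZMod p)⁻¹ * ∑ i ∈ range n, (i : ZMod p)⁻¹ * ((n : ZMod p) - i)⁻¹ := by
  rw [← sum_neg_distrib]
  simp only [mul_sum, ← sum_neg_distrib]
  rw [sum_sigma']
  refine sum_bij_ne_zero (fun l _ _ => ⟨l 0 + l 1, l 0⟩) ?_ ?_ ?_ ?_
  · intro l hl _
    simp [Fin.forall_fin_succ] at hl ⊢
    omega
  · intro l hl _ l' hl' _ h
    simp [Fin.forall_fin_succ] at hl hl' h
    ext i
    fin_cases i <;> simp <;> omega
  · rintro ⟨n, i⟩ h h0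
    simp only [mem_sigma, mem_range] at h
    have hn : ((n : ℕ) : ZMod p) ≠ 0 := by intro h; simp [h] at h0
    have hi : ((i : ℕ) : ZMod p) ≠ 0 := by intro h; simp [h] at h0
    have hni : ((n : ℕ) : ZMod p) - i ≠ 0 := by intro h; simp [h] at h0
    have hk : ((m * p - n : ℕ) : ZMod p) = - n := by rw [Nat.cast_sub (by omega)]; simp
    rw [← Nat.cast_sub (by omega)] at hni
    have hi0 : i ≠ 0 := by rintro rfl; simp at hi
    refine ⟨![i, n - i, m * p - n], ?_, ?_, ?_⟩
    · simp only [mem_filter, Fintype.mem_piFinset, Fin.forall_fin_succ, ← ZMod.natCast_eq_zero_iff]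
      refine ⟨⟨?_, ?_, ?_, ?_⟩, ?_, ?_, ?_, ?_, ?_⟩
      · simp; omega
      · simp; omega
      · exact mem_Ioo.2 ⟨show 0 < m * p - n by omega, show m * p - n < m * p by omega⟩
      · simp
      · simp; omega
      · simpa using hi
      · simpa using hni
      · simpa [hk] using hn
      · simp
    · simp [hk, hn, hi, hni]
    · simp; omega
  · intro l hl _
    have hs : (l 0 : ZMod p) + l 1 + l 2 = 0 := by
      have := (mem_filter.1 hl).2.1
      have h2 : ((l 0 + l 1 + l 2 : ℕ) : ZMod p) = ((m * p : ℕ) : ZMod p) := by rw [this]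
      simpa using h2
    have : (l 2 : ZMod p) = - ((l 0 : ZMod p) + l 1) := by linear_combination hs
    rw [this, inv_neg]
    push_cast
    rw [add_sub_cancel_left]
    ring
end

theorem stmt_12 (p m : ℕ) [hp : Fact p.Prime] (hp5 : 5 ≤ p) (hm : 0 < m)
    (hpm : ¬ p ∣ m) :
    ‖((((∑ l ∈ (Fintype.piFinset fun _ : Fin 3 => Finset.Ioo 0 (m * p)).filter
            (fun l : Fin 3 → ℕ => l 0 + l 1 + l 2 = m * p ∧ ∀ i, ¬ p ∣ l i),
          (1 : ℚ) / (l 0 * l 1 * l 2)) + 2 * m * bernoulli (p - 3)) : ℚ) : ℚ_[p])‖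
      ≤ (p : ℝ) ^ (-1 : ℤ) := by
  apply Red.norm
  choose! β hβ using fun k => bern_red (p := p) k
  have h1 : Red p (∑ l ∈ (Fintype.piFinset fun _ : Fin 3 => Finset.Ioo 0 (m * p)).filter
            (fun l : Fin 3 → ℕ => l 0 + l 1 + l 2 = m * p ∧ ∀ i, ¬ p ∣ l i),
          (1 : ℚ) / (l 0 * l 1 * l 2)) (-(2 * m * β (p - 3))) := by
    rw [← T_eq hp5 β hβ, ← reindex]
    refine Red.sum _ _ _ fun l hl => ?_
    have hd := (mem_filter.1 hl).2.2
    rw [one_div, mul_inv, mul_inv]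
    exact ((Red.inv (hd 0)).mul (Red.inv (hd 1))).mul (Red.inv (hd 2))
  have h2 := h1.add (((Red.nat 2).mul (Red.nat m)).mul (hβ (p - 3) (by omega)))
  simpa using h2
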